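/- Let γ ∈ ℂ with Re γ > 1/2 and Im γ > 0, and set μ := γ/(1−γ). Let Q := {(z₁,z₂,z₃,z₄) ∈ ℂ⁴ : z₃ = (z₁ + 2γ·conj z₂)² and z₄ = (z₂ + 2(1 − conj γ)·conj z₁)²} and K := {(z₁,z₂,z₃,z₄) ∈ ℂ⁴ : z₃ = (1−2γ)²·z₁² and z₄ = (1 − 2·conj γ)²·z₂²}. Define M₁ := {(a, −conj a, (1−2γ)²·a², (1−2·conj γ)²·(conj a)²) : a ∈ ℂ} and M₂ := {(−μ·conj b, b, (1−2γ)²·μ²·(conj b)², (1−2·conj γ)²·b²) : b ∈ ℂ}. Then: (a) M₁ ∪ M₂ ⊆ Q ∩ K; (b) the real 2-dimensional real-linear subspaces V₁ := {(a, −conj a, 0, 0) : a ∈ ℂ} and V₂ := {(−μ·conj b, b, 0, 0) : b ∈ ℂ} of ℂ⁴ are totally real, i.e. V₁ ∩ iV₁ = {0} and V₂ ∩ iV₂ = {0}, and V₁ ∩ V₂ = {0}. -/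

import Mathlib

/-- The quadric of complex type `Q_γ ⊂ ℂ⁴`. -/
def Qset (γ : ℂ) : Set (ℂ × ℂ × ℂ × ℂ) :=
  {v | v.2.2.1 = (v.1 + 2 * γ * (starRingEnd ℂ) v.2.1) ^ 2 ∧
    v.2.2.2 = (v.2.1 + 2 * (1 - (starRingEnd ℂ) γ) * (starRingEnd ℂ) v.1) ^ 2}

/-- The attached complex 2-dimensional submanifold `K ⊂ ℂ⁴`. -/
def Kset (γ : ℂ) : Set (ℂ × ℂ × ℂ × ℂ) :=
  {v | v.2.2.1 = (1 - 2 * γ) ^ 2 * v.1 ^ 2 ∧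
    v.2.2.2 = (1 - 2 * (starRingEnd ℂ) γ) ^ 2 * v.2.1 ^ 2}

/-- The first totally real surface `M₁ ⊂ Q_γ ∩ K`. -/
def M1set (γ : ℂ) : Set (ℂ × ℂ × ℂ × ℂ) :=
  {v | ∃ a : ℂ, v = (a, -((starRingEnd ℂ) a), (1 - 2 * γ) ^ 2 * a ^ 2,
    (1 - 2 * (starRingEnd ℂ) γ) ^ 2 * ((starRingEnd ℂ) a) ^ 2)}

/-- The second totally real surface `M₂ ⊂ Q_γ ∩ K`. -/
def M2set (γ μ : ℂ) : Set (ℂ × ℂ × ℂ × ℂ) :=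
  {v | ∃ b : ℂ, v = (-(μ * (starRingEnd ℂ) b), b,
    (1 - 2 * γ) ^ 2 * μ ^ 2 * ((starRingEnd ℂ) b) ^ 2,
    (1 - 2 * (starRingEnd ℂ) γ) ^ 2 * b ^ 2)}

/-- The tangent plane `V₁` of `M₁` at `0`. -/
def V1set : Set (ℂ × ℂ × ℂ × ℂ) := {v | ∃ a : ℂ, v = (a, -((starRingEnd ℂ) a), 0, 0)}

/-- The tangent plane `V₂` of `M₂` at `0`. -/
def V2set (μ : ℂ) : Set (ℂ × ℂ × ℂ × ℂ) := {v | ∃ b : ℂ, v = (-(μ * (starRingEnd ℂ) b), b, 0, 0)}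

/-- With `Re γ > 1/2`, `Im γ > 0` and `μ = γ/(1−γ)`: `M₁ ∪ M₂ ⊆ Q_γ ∩ K`, the planes
`V₁, V₂` are totally real (`V ∩ iV = {0}`), and `V₁ ∩ V₂ = {0}`. -/
theorem stmt_14 (γ : ℂ) (hre : 1 / 2 < γ.re) (him : 0 < γ.im)
    (μ : ℂ) (hμ : μ = γ / (1 - γ)) :
    (M1set γ ∪ M2set γ μ ⊆ Qset γ ∩ Kset γ) ∧
    (V1set ∩ (fun v : ℂ × ℂ × ℂ × ℂ => Complex.I • v) '' V1set = {0}) ∧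
    (V2set μ ∩ (fun v : ℂ × ℂ × ℂ × ℂ => Complex.I • v) '' V2set μ = {0}) ∧
    (V1set ∩ V2set μ = {0}) := by
  have h1 : 1 - γ ≠ 0 := by
    intro h
    have := congrArg Complex.im h
    simp at this
    linarith
  have h0 : γ ≠ 0 := by
    rintro rfl
    simp at him
  have hm : μ * (1 - γ) = γ := by rw [hμ]; field_simp
  have hm' : (starRingEnd ℂ) μ * (1 - (starRingEnd ℂ) γ) = (starRingEnd ℂ) γ := by
    simpa using congrArg (starRingEnd ℂ) hm
  have hμ0 : μ ≠ 0 := by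
    rintro rfl
    apply h0
    rw [← hm, zero_mul]
  have hμ1 : μ ≠ 1 := by
    rintro rfl
    have := congrArg Complex.re hm
    simp at this
    linarith
  have hI : Complex.I ≠ 0 := Complex.I_ne_zero
  refine ⟨?_, ?_, ?_, ?_⟩
  · rintro v (⟨a, rfl⟩ | ⟨b, rfl⟩)
    · refine ⟨⟨?_, ?_⟩, ⟨?_, ?_⟩⟩ <;> simp <;> ring
    · refine ⟨⟨?_, ?_⟩, ⟨?_, ?_⟩⟩
      · have e : -(μ * (starRingEnd ℂ) b) + 2 * γ * (starRingEnd ℂ) b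
            = (1 - 2 * γ) * μ * (starRingEnd ℂ) b := by
          linear_combination (-2 * (starRingEnd ℂ) b) * hm
        change _ = (-(μ * (starRingEnd ℂ) b) + 2 * γ * (starRingEnd ℂ) b) ^ 2
        rw [e]; ring
      · have e : b + 2 * (1 - (starRingEnd ℂ) γ) * (starRingEnd ℂ) (-(μ * (starRingEnd ℂ) b))
            = (1 - 2 * (starRingEnd ℂ) γ) * b := by
          simp only [map_neg, map_mul, Complex.conj_conj]
          linear_combination (-2 * b) * hm'
        change _ = (b + 2 * (1 - (starRingEnd ℂ) γ) *
          (starRingEnd ℂ) (-(μ * (starRingEnd ℂ) b))) ^ 2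
        rw [e]; ring
      · simp; ring
      · rfl
  · ext v
    simp only [Set.mem_singleton_iff]
    constructor
    · rintro ⟨⟨a, rfl⟩, ⟨w, ⟨c, rfl⟩, h⟩⟩
      simp only [Prod.smul_mk, Prod.mk.injEq, smul_eq_mul] at h
      obtain ⟨e1, e2, -, -⟩ := h
      rw [← e1] at e2
      simp only [map_mul, Complex.conj_I] at e2
      have : Complex.I * (starRingEnd ℂ) c = 0 := by linear_combination (-1 / 2) * e2
      have hc : c = 0 := by simpa using this
      have ha : a = 0 := by rw [← e1, hc, mul_zero]
      simp [ha]
    · rintro rfl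
      exact ⟨⟨0, by simp; rfl⟩, ⟨0, ⟨0, by simp; rfl⟩, by simp⟩⟩
  · ext v
    simp only [Set.mem_singleton_iff]
    constructor
    · rintro ⟨⟨a, rfl⟩, ⟨w, ⟨c, rfl⟩, h⟩⟩
      simp only [Prod.smul_mk, Prod.mk.injEq, smul_eq_mul] at h
      obtain ⟨e2, e1, -, -⟩ := h
      rw [← e1] at e2
      simp only [map_mul, Complex.conj_I] at e2
      have : Complex.I * (μ * (starRingEnd ℂ) c) = 0 := by linear_combination (-1 / 2) * e2
      have hc : c = 0 := by simpa [hμ0] using this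
      have ha : a = 0 := by rw [← e1, hc, mul_zero]
      simp [ha]
    · rintro rfl
      exact ⟨⟨0, by simp; rfl⟩, ⟨0, ⟨0, by simp; rfl⟩, by simp⟩⟩
  · ext v
    simp only [Set.mem_singleton_iff]
    constructor
    · rintro ⟨⟨a, rfl⟩, ⟨b, h⟩⟩
      simp only [Prod.mk.injEq] at h
      obtain ⟨e1, e2, -, -⟩ := h
      rw [← e2] at e1
      simp only [map_neg, Complex.conj_conj] at e1
      have : (μ - 1) * a = 0 := by linear_combination -e1
      have ha : a = 0 := (mul_eq_zero.mp this).resolve_left (sub_ne_zero.mpr hμ1)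
      simp [ha]
    · rintro rfl
      exact ⟨⟨0, by simp; rfl⟩, ⟨0, by simp; rfl⟩⟩
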